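/- arXiv:2005.06207 — 2 statements merged into one kernel-verified Lean document; each statement's English description precedes it below -/
import Mathlib

section
/- Suppose the standing assumptions on f, g, h, Ω, F hold together with Assumptions 1 and 2. Let c₀ ∈ ℝ be such that the sublevel set {x : F(x) ≤ c₀} is nonempty, and set M := sup{g(x) : x ∈ ℝⁿ, F(x) ≤ c₀} (a finite positive real). Let a > 0, let x ∈ ℝⁿ with F(x) ≤ c₀, set c := F(x), let y ∈ ∂g(x), let α satisfy 0 < α ≤ 1/(a·M + L), and let x̃ ∈ prox_{α·f}(x − α·∇h(x) + α·c·y). Then x̃ ∈ dom(F) and F(x̃) ≤ c − (a/2)·‖x̃ − x‖₂²; in particular F(x̃) ≤ c₀. -/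
open Filter Topology
open scoped RealInnerProductSpace

noncomputable section

/-- The Fréchet subdifferential of an extended-real-valued function `φ` at `x`:
the set of `y` with `liminf_{z→x, z≠x} (φ z − φ x − ⟨y, z−x⟩)/‖z−x‖ ≥ 0`,
empty when `φ x = +∞`. -/
def fsub {n : ℕ} (φ : EuclideanSpace ℝ (Fin n) → EReal) (x : EuclideanSpace ℝ (Fin n)) :
    Set (EuclideanSpace ℝ (Fin n)) :=
  {y | φ x ≠ ⊤ ∧
    0 ≤ liminf (fun z => (φ z - φ x - ((⟪y, z - x⟫ : ℝ) : EReal)) / ((‖z - x‖ : ℝ) : EReal))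
      (𝓝[≠] x)}

/-- The limiting (Mordukhovich) subdifferential. -/
def lsub {n : ℕ} (φ : EuclideanSpace ℝ (Fin n) → EReal) (x : EuclideanSpace ℝ (Fin n)) :
    Set (EuclideanSpace ℝ (Fin n)) :=
  {y | ∃ u : ℕ → EuclideanSpace ℝ (Fin n), ∃ v : ℕ → EuclideanSpace ℝ (Fin n),
      Tendsto u atTop (𝓝 x) ∧ Tendsto (fun k => φ (u k)) atTop (𝓝 (φ x)) ∧
      (∀ k, v k ∈ fsub φ (u k)) ∧ Tendsto v atTop (𝓝 y)}

/-- The subdifferential of a convex real-valued function. -/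
def csub {n : ℕ} (g : EuclideanSpace ℝ (Fin n) → ℝ) (x : EuclideanSpace ℝ (Fin n)) :
    Set (EuclideanSpace ℝ (Fin n)) :=
  {y | ∀ z, g x + ⟪y, z - x⟫ ≤ g z}

/-- The (possibly set-valued) proximity operator of a proper lsc extended-real-valued
function `ψ` at `u`. -/
def proxSet {n : ℕ} (ψ : EuclideanSpace ℝ (Fin n) → EReal) (u : EuclideanSpace ℝ (Fin n)) :
    Set (EuclideanSpace ℝ (Fin n)) :=
  {y | ∀ z, ψ y + ((‖y - u‖ ^ 2 / 2 : ℝ) : EReal) ≤ ψ z + ((‖z - u‖ ^ 2 / 2 : ℝ) : EReal)}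

/-- The fractional objective `F = (f+h)/g` on `Ω ∩ dom f`, `+∞` elsewhere. -/
def Ffrac {n : ℕ} (f : EuclideanSpace ℝ (Fin n) → EReal) (g h : EuclideanSpace ℝ (Fin n) → ℝ) :
    EuclideanSpace ℝ (Fin n) → EReal :=
  fun x => if g x ≠ 0 ∧ f x ≠ ⊤ then ((((f x).toReal + h x) / g x : ℝ) : EReal) else ⊤

/-!
The proximal step minimises, up to a constant, the model
`f z + ⟪∇h x - c • y, z - x⟫ + ‖z - x‖ ^ 2 / (2 * α)`. Comparing its values at `x̃` and `x`, and
bounding `h` by the descent lemma and `g` by its subgradient inequality (this needs `c ≥ 0`), gives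
`f x̃ + h x̃ + (1 / α - L) / 2 * ‖x̃ - x‖ ^ 2 ≤ c * g x̃`, where `1 / α - L ≥ a * M`.
Assumption 1 now excludes `g x̃ = 0`, so dividing by `g x̃ > 0` yields first `F x̃ ≤ c`, hence
`g x̃ ≤ M`, and with this bound the sharper decrease.
-/

section EReal

lemma ne_bot_of_nonneg_add_coe {e : EReal} {r : ℝ} (h : 0 ≤ e + (r : EReal)) : e ≠ ⊥ := by
  rintro rfl
  simp at h

lemma coe_toReal_add_coe {e : EReal} (htop : e ≠ ⊤) (hbot : e ≠ ⊥) (r : ℝ) :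
    ((e.toReal + r : ℝ) : EReal) = e + (r : EReal) := by
  rw [EReal.coe_add, EReal.coe_toReal htop hbot]

lemma toReal_add_nonneg_of_nonneg_add_coe {e : EReal} {r : ℝ} (h : 0 ≤ e + (r : EReal))
    (htop : e ≠ ⊤) : 0 ≤ e.toReal + r := by
  rw [← coe_toReal_add_coe htop (ne_bot_of_nonneg_add_coe h)] at h
  exact_mod_cast h

end EReal

section FracObjective

/-- The fractional objective `(f + h) / g`, with value `+∞` where `g = 0` or `f = +∞`, on an
arbitrary type; `Ffrac` is definitionally the case of Euclidean space. The quotient is taken in `ℝ`,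
so it is meaningful only where `f ≠ -∞`. -/
def fracObjective {X : Type*} (f : X → EReal) (g h : X → ℝ) : X → EReal :=
  fun x => if g x ≠ 0 ∧ f x ≠ ⊤ then ((((f x).toReal + h x) / g x : ℝ) : EReal) else ⊤

variable {X : Type*} {f : X → EReal} {g h : X → ℝ} {x : X}

lemma fracObjective_of_ne (hg : g x ≠ 0) (hf : f x ≠ ⊤) :
    fracObjective f g h x = ((((f x).toReal + h x) / g x : ℝ) : EReal) :=
  if_pos ⟨hg, hf⟩

lemma fracObjective_ne_top_iff : fracObjective f g h x ≠ ⊤ ↔ g x ≠ 0 ∧ f x ≠ ⊤ := by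
  unfold fracObjective
  split_ifs with hdom <;> simp [hdom]

lemma fracObjective_ne_bot : fracObjective f g h x ≠ ⊥ := by
  unfold fracObjective
  split_ifs <;> simp

lemma toReal_fracObjective_mul (hg : g x ≠ 0) (hf : f x ≠ ⊤) :
    (fracObjective f g h x).toReal * g x = (f x).toReal + h x := by
  rw [fracObjective_of_ne hg hf, EReal.toReal_coe, div_mul_cancel₀ _ hg]

lemma fracObjective_le_coe_iff (hg : 0 < g x) (hf : f x ≠ ⊤) {r : ℝ} :
    fracObjective f g h x ≤ (r : EReal) ↔ (f x).toReal + h x ≤ r * g x := by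
  rw [fracObjective_of_ne hg.ne' hf, EReal.coe_le_coe_iff, div_le_iff₀ hg]

lemma denominator_ne_zero_of_numerator_le_mul {c : ℝ} (hf : f x ≠ ⊤)
    (hfh : 0 ≤ f x + (h x : EReal)) (hne : g x = 0 → f x + (h x : EReal) ≠ 0)
    (hle : (f x).toReal + h x ≤ c * g x) : g x ≠ 0 := by
  intro hg
  have hnumerator : (f x).toReal + h x = 0 :=
    le_antisymm (by simpa only [hg, mul_zero] using hle)
      (toReal_add_nonneg_of_nonneg_add_coe hfh hf)
  apply hne hg
  rw [← coe_toReal_add_coe hf (ne_bot_of_nonneg_add_coe hfh), hnumerator, EReal.coe_zero]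

end FracObjective

section DescentLemma

variable {E : Type*} [NormedAddCommGroup E] [InnerProductSpace ℝ E]

lemma inner_sub_le_mul_sq_of_lipschitzWith {G : E → E} {K : NNReal} (hG : LipschitzWith K G)
    (x d : E) {t : ℝ} (ht : 0 ≤ t) : ⟪G (x + t • d) - G x, d⟫ ≤ t * (K * ‖d‖ ^ 2) := by
  have hlip : ‖G (x + t • d) - G x‖ ≤ K * (t * ‖d‖) := by
    simpa only [add_sub_cancel_left, norm_smul, Real.norm_of_nonneg ht]
      using hG.norm_sub_le (x + t • d) x
  calc ⟪G (x + t • d) - G x, d⟫ ≤ ‖G (x + t • d) - G x‖ * ‖d‖ := real_inner_le_norm _ _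
    _ ≤ K * (t * ‖d‖) * ‖d‖ := by gcongr
    _ = t * (K * ‖d‖ ^ 2) := by ring

variable [CompleteSpace E]

lemma hasDerivAt_comp_add_smul_of_hasGradientAt {h : E → ℝ} {v x d : E} {t : ℝ}
    (hh : HasGradientAt h v (x + t • d)) :
    HasDerivAt (fun s : ℝ => h (x + s • d)) ⟪v, d⟫ t := by
  have hline : HasDerivAt (fun s : ℝ => x + s • d) d t := by
    simpa only [one_smul] using ((hasDerivAt_id' t).smul_const d).const_add x
  exact (hh.hasFDerivAt.comp_hasDerivAt t hline).congr_deriv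
    (InnerProductSpace.toDual_apply_apply ..)

lemma le_add_inner_add_sq_of_lipschitzWith_gradient {h : E → ℝ} {h' : E → E} {K : NNReal}
    (hgrad : ∀ z, HasGradientAt h (h' z) z) (hlip : LipschitzWith K h') (x z : E) :
    h z ≤ h x + ⟪h' x, z - x⟫ + K / 2 * ‖z - x‖ ^ 2 := by
  set d := z - x with hd
  let majorant : ℝ → ℝ := fun t => h x + t * ⟪h' x, d⟫ + t ^ 2 * (K / 2 * ‖d‖ ^ 2)
  have hderiv (t : ℝ) : HasDerivAt (fun s : ℝ => h (x + s • d)) ⟪h' (x + t • d), d⟫ t :=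
    hasDerivAt_comp_add_smul_of_hasGradientAt (hgrad _)
  have hmajorant (t : ℝ) : HasDerivAt majorant (⟪h' x, d⟫ + t * (K * ‖d‖ ^ 2)) t := by
    convert! (((hasDerivAt_id' t).mul_const ⟪h' x, d⟫).const_add (h x)).add
      ((hasDerivAt_pow 2 t).mul_const (K / 2 * ‖d‖ ^ 2)) using 1
    push_cast
    ring
  have hslope (t : ℝ) (ht : t ∈ Set.Ico (0 : ℝ) 1) :
      ⟪h' (x + t • d), d⟫ ≤ ⟪h' x, d⟫ + t * (K * ‖d‖ ^ 2) := by
    have hdiff := inner_sub_le_mul_sq_of_lipschitzWith hlip x d ht.1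
    rw [inner_sub_left] at hdiff
    linarith
  have hle : h (x + (1 : ℝ) • d) ≤ majorant 1 :=
    image_le_of_deriv_right_le_deriv_boundary
      (fun t _ => (hderiv t).continuousAt.continuousWithinAt)
      (fun t _ => (hderiv t).hasDerivWithinAt) (by simp [majorant])
      (fun t _ => (hmajorant t).continuousAt.continuousWithinAt)
      (fun t _ => (hmajorant t).hasDerivWithinAt) hslope (Set.right_mem_Icc.2 zero_le_one)
  simpa [majorant, hd] using hle

end DescentLemma

section ProximalStep

variable {E : Type*} [NormedAddCommGroup E]

lemma ne_top_of_isMinOn_prox {f : E → EReal} {α : ℝ} (hα : 0 < α) {u p x : E}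
    (hmin : IsMinOn (fun z => (α : EReal) * f z + ((‖z - u‖ ^ 2 / 2 : ℝ) : EReal)) Set.univ p)
    (hx : f x ≠ ⊤) : f p ≠ ⊤ := by
  intro hp
  have hle := isMinOn_univ_iff.1 hmin x
  simp only [hp, EReal.coe_mul_top_of_pos hα, EReal.top_add_coe, top_le_iff] at hle
  refine EReal.add_ne_top ?_ (EReal.coe_ne_top _) hle
  simp [EReal.mul_ne_top, hx, hα.le]

variable [InnerProductSpace ℝ E]

lemma add_inner_add_sq_le_of_prox_le {α : ℝ} (hα : 0 < α) {s t : ℝ} {v p x : E}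
    (hle : α * s + ‖p - (x - α • v)‖ ^ 2 / 2 ≤ α * t + ‖x - (x - α • v)‖ ^ 2 / 2) :
    s + ⟪v, p - x⟫ + 1 / α / 2 * ‖p - x‖ ^ 2 ≤ t := by
  have hexpand : ‖p - (x - α • v)‖ ^ 2
      = ‖p - x‖ ^ 2 + 2 * (α * ⟪v, p - x⟫) + ‖α • v‖ ^ 2 := by
    rw [← sub_add, norm_add_sq_real, real_inner_smul_right, real_inner_comm]
  rw [hexpand, sub_sub_cancel] at hle
  refine le_of_mul_le_mul_left ?_ hα
  calc α * (s + ⟪v, p - x⟫ + 1 / α / 2 * ‖p - x‖ ^ 2)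
      = α * s + α * ⟪v, p - x⟫ + ‖p - x‖ ^ 2 / 2 := by field_simp
    _ ≤ α * t := by linarith

lemma toReal_add_inner_add_sq_le_of_isMinOn_prox {f : E → EReal} (hbot : ∀ z, f z ≠ ⊥) {α : ℝ}
    (hα : 0 < α) {v p x : E} (hx : f x ≠ ⊤)
    (hmin : IsMinOn (fun z => (α : EReal) * f z + ((‖z - (x - α • v)‖ ^ 2 / 2 : ℝ) : EReal))
      Set.univ p) :
    (f p).toReal + ⟪v, p - x⟫ + 1 / α / 2 * ‖p - x‖ ^ 2 ≤ (f x).toReal := by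
  have hp : f p ≠ ⊤ := ne_top_of_isMinOn_prox hα hmin hx
  have hle := isMinOn_univ_iff.1 hmin x
  rw [← EReal.coe_toReal hx (hbot x), ← EReal.coe_toReal hp (hbot p)] at hle
  exact add_inner_add_sq_le_of_prox_le hα (by exact_mod_cast hle)

lemma toReal_add_add_sq_le_mul_of_isMinOn_prox [CompleteSpace E] {f : E → EReal} {g h : E → ℝ}
    {h' : E → E} {K : NNReal} (hbot : ∀ z, f z ≠ ⊥) (hgrad : ∀ z, HasGradientAt h (h' z) z)
    (hlip : LipschitzWith K h') {α c : ℝ} (hα : 0 < α) (hc : 0 ≤ c) {x y p : E} (hx : f x ≠ ⊤)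
    (hxc : (f x).toReal + h x = c * g x) (hy : ∀ z, g x + ⟪y, z - x⟫ ≤ g z)
    (hmin : IsMinOn (fun z => (α : EReal) * f z
      + ((‖z - (x - α • h' x + (α * c) • y)‖ ^ 2 / 2 : ℝ) : EReal)) Set.univ p) :
    (f p).toReal + h p + (1 / α - K) / 2 * ‖p - x‖ ^ 2 ≤ c * g p := by
  have hcenter : x - α • h' x + (α * c) • y = x - α • (h' x - c • y) := by
    rw [smul_sub, smul_smul, ← sub_add]
  rw [hcenter] at hmin
  have hprox := toReal_add_inner_add_sq_le_of_isMinOn_prox hbot hα hx hmin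
  rw [inner_sub_left, real_inner_smul_left] at hprox
  have hdescent := le_add_inner_add_sq_of_lipschitzWith_gradient hgrad hlip x p
  have hsubgradient := mul_le_mul_of_nonneg_left (hy p) hc
  linarith

end ProximalStep

lemma bddAbove_image_of_convexOn_of_isBounded {E : Type*} [NormedAddCommGroup E] [NormedSpace ℝ E]
    [FiniteDimensional ℝ E] {g : E → ℝ} (hg : ConvexOn ℝ Set.univ g) {s : Set E}
    (hs : Bornology.IsBounded s) : BddAbove (g '' s) :=
  have : ProperSpace E := FiniteDimensional.proper_real E
  (hs.isCompact_closure.bddAbove_image hg.locallyLipschitz.continuous.continuousOn).mono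
    (Set.image_mono subset_closure)

theorem pgsa_line_search_acceptance_general {E : Type*} [NormedAddCommGroup E]
    [InnerProductSpace ℝ E] [CompleteSpace E] {f : E → EReal} {g h : E → ℝ} {h' : E → E}
    {K : NNReal} (hgrad : ∀ z, HasGradientAt h (h' z) z) (hlip : LipschitzWith K h')
    (hfh : ∀ z, 0 ≤ f z + (h z : EReal)) (hg_pos : ∀ z, f z ≠ ⊤ → g z ≠ 0 → 0 < g z)
    (hne : ∀ z, g z = 0 → f z + (h z : EReal) ≠ 0) {c₀ M a : ℝ}
    (hM : ∀ z, fracObjective f g h z ≤ (c₀ : EReal) → g z ≤ M) (ha : 0 ≤ a)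
    {x : E} (hx : fracObjective f g h x ≤ (c₀ : EReal)) {c : ℝ}
    (hc : c = (fracObjective f g h x).toReal) {y : E} (hy : ∀ z, g x + ⟪y, z - x⟫ ≤ g z)
    {α : ℝ} (hα : 0 < α) (hα_le : α ≤ 1 / (a * M + K)) {p : E}
    (hmin : IsMinOn (fun z => (α : EReal) * f z
      + ((‖z - (x - α • h' x + (α * c) • y)‖ ^ 2 / 2 : ℝ) : EReal)) Set.univ p) :
    (g p ≠ 0 ∧ f p ≠ ⊤) ∧
      fracObjective f g h p ≤ ((c - a / 2 * ‖p - x‖ ^ 2 : ℝ) : EReal) ∧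
      fracObjective f g h p ≤ (c₀ : EReal) := by
  obtain ⟨hgx, hfx⟩ := fracObjective_ne_top_iff.1 (hx.trans_lt (EReal.coe_lt_top c₀)).ne
  have hgx_pos : 0 < g x := hg_pos x hfx hgx
  have hM_pos : 0 < M := hgx_pos.trans_le (hM x hx)
  have hxc : (f x).toReal + h x = c * g x := by rw [hc, toReal_fracObjective_mul hgx hfx]
  have hc_nonneg : 0 ≤ c := nonneg_of_mul_nonneg_left
    (hxc ▸ toReal_add_nonneg_of_nonneg_add_coe (hfh x) hfx) hgx_pos
  have hc_le : (c : EReal) ≤ c₀ := (hc ▸ EReal.coe_toReal_le fracObjective_ne_bot).trans hx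
  have hfp : f p ≠ ⊤ := ne_top_of_isMinOn_prox hα hmin hfx
  have hstep : a * M ≤ 1 / α - K :=
    le_sub_iff_add_le.2 ((le_one_div hα (one_div_pos.1 (hα.trans_le hα_le))).1 hα_le)
  have hdecrease : (f p).toReal + h p + a * M / 2 * ‖p - x‖ ^ 2 ≤ c * g p := by
    grw [hstep]
    exact toReal_add_add_sq_le_mul_of_isMinOn_prox (fun z => ne_bot_of_nonneg_add_coe (hfh z))
      hgrad hlip hα hc_nonneg hfx hxc hy hmin
  have hdecrease_weak : (f p).toReal + h p ≤ c * g p :=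
    (le_add_of_nonneg_right (by positivity)).trans hdecrease
  have hgp : g p ≠ 0 := denominator_ne_zero_of_numerator_le_mul hfp (hfh p) (hne p) hdecrease_weak
  have hgp_pos : 0 < g p := hg_pos p hfp hgp
  have hFp : fracObjective f g h p ≤ (c₀ : EReal) :=
    ((fracObjective_le_coe_iff hgp_pos hfp).2 hdecrease_weak).trans hc_le
  refine ⟨⟨hgp, hfp⟩, (fracObjective_le_coe_iff hgp_pos hfp).2 ?_, hFp⟩
  have hgap : a / 2 * ‖p - x‖ ^ 2 * g p ≤ a / 2 * ‖p - x‖ ^ 2 * M := by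
    gcongr
    exact hM p hFp
  linarith

/-- Lemma 5.1 (key step): acceptance of the line-search step in PGSA_L. -/
theorem pgsa_line_search_acceptance
    {n : ℕ} (hn : 1 ≤ n)
    (f : EuclideanSpace ℝ (Fin n) → EReal) (g h : EuclideanSpace ℝ (Fin n) → ℝ)
    (h' : EuclideanSpace ℝ (Fin n) → EuclideanSpace ℝ (Fin n)) (L : ℝ)
    (hf_ne_bot : ∀ z, f z ≠ ⊥) (hf_proper : ∃ z, f z ≠ ⊤)
    (hf_lsc : LowerSemicontinuous f)
    (hf_bdd : ∃ m : ℝ, ∀ z, (m : EReal) ≤ f z)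
    (hf_cont : ContinuousOn f {z | f z ≠ ⊤})
    (hg_cvx : ConvexOn ℝ Set.univ g)
    (hL : 0 < L)
    (hh_grad : ∀ z, HasGradientAt h (h' z) z)
    (hh_lip : LipschitzWith (Real.toNNReal L) h')
    (hΩ : ∃ z, g z ≠ 0)
    (hfh : ∀ z, 0 ≤ f z + ((h z : ℝ) : EReal))
    (hg_pos : ∀ z, f z ≠ ⊤ → g z ≠ 0 → 0 < g z)
    (hA1 : ∀ z, g z = 0 → f z + ((h z : ℝ) : EReal) ≠ 0)
    (hA2 : ∀ t : ℝ, Bornology.IsBounded {z | Ffrac f g h z ≤ (t : EReal)})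
    (c₀ : ℝ) (hlev : ∃ z, Ffrac f g h z ≤ (c₀ : EReal))
    (M : ℝ) (hM : M = sSup (g '' {z | Ffrac f g h z ≤ (c₀ : EReal)}))
    (a : ℝ) (ha : 0 < a)
    (x : EuclideanSpace ℝ (Fin n)) (hx : Ffrac f g h x ≤ (c₀ : EReal))
    (c : ℝ) (hc : c = (Ffrac f g h x).toReal)
    (y : EuclideanSpace ℝ (Fin n)) (hy : y ∈ csub g x)
    (α : ℝ) (hα_pos : 0 < α) (hα_le : α ≤ 1 / (a * M + L))
    (xt : EuclideanSpace ℝ (Fin n))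
    (hxt : xt ∈ proxSet (fun z => ((α : ℝ) : EReal) * f z) (x - α • h' x + (α * c) • y)) :
    (g xt ≠ 0 ∧ f xt ≠ ⊤) ∧
      Ffrac f g h xt ≤ ((c - a / 2 * ‖xt - x‖ ^ 2 : ℝ) : EReal) ∧
      Ffrac f g h xt ≤ (c₀ : EReal) := by
  have hg_le z (hz : Ffrac f g h z ≤ (c₀ : EReal)) : g z ≤ M :=
    hM ▸ le_csSup (bddAbove_image_of_convexOn_of_isBounded hg_cvx (hA2 c₀)) ⟨z, hz, rfl⟩
  exact pgsa_line_search_acceptance_general hh_grad hh_lip hfh hg_pos hA1 hg_le ha.le hx hc hy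
    hα_pos (by rwa [Real.coe_toNNReal L hL.le]) (isMinOn_univ_iff.2 hxt)
end
end

section
/- Suppose the standing assumptions on f, g, h, Ω, F hold together with Assumptions 1 and 2. Let a > 0, N ∈ ℕ, and 0 < α̲ ≤ ᾱ. Let (x^k) be a sequence in ℝⁿ with x⁰ ∈ dom(F) such that for every k ∈ ℕ there exist α_k ∈ [α̲, ᾱ] and y^{k+1} ∈ ∂g(x^k) with x^{k+1} ∈ prox_{α_k·f}(x^k − α_k·∇h(x^k) + α_k·c_k·y^{k+1}) where c_k := F(x^k), and moreover x^{k+1} ∈ dom(F) and F(x^{k+1}) ≤ max{c_j : max(k−N,0) ≤ j ≤ k} − (a/2)·‖x^{k+1} − x^k‖₂². Then every accumulation point x⋆ of (x^k) lies in dom(F) and is a critical point of F: there exists y⋆ ∈ ∂g(x⋆) with F(x⋆)·y⋆ − ∇h(x⋆) ∈ ∂̂f(x⋆). -/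
open Filter Topology
open scoped RealInnerProductSpace

noncomputable section

/-!
Let `c k = F (x k)`. The maximum of `c` over the sliding window `[k - N, k]` is nonincreasing, hence
converges to some `m`, and all iterates stay in the compact sublevel set of `x 0`, on which `F` is
uniformly continuous. Every window contains an index where `c` is at least `m`. Going backwards from
such an index, `c (k + 1) → m` forces the decrease `a / 2 * ‖x (k + 1) - x k‖ ^ 2` to vanish, and
then uniform continuity gives `c k → m`; after at most `N` steps back this covers every `k`, so the
steps `x (k + 1) - x k` tend to `0`. Consequently the inclusion defining `x (k + 1)` passes to the
limit along any ultrafilter witnessing the accumulation point `xs`, where the step sizes and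
subgradients converge by compactness. Thus `xs` is a fixed point of a proximal step, which is
criticality.
-/

section NonmonotoneDescent

/-- The maximum of `c` over the last `N + 1` indices `k - N, …, k`, the reference value of a
nonmonotone line search. The subtraction is truncated, so the window is shorter when `k < N`. -/
def windowMax {β : Type*} [SemilatticeSup β] (N : ℕ) (c : ℕ → β) (k : ℕ) : β :=
  (Finset.Icc (k - N) k).sup' (Finset.nonempty_Icc.mpr (Nat.sub_le k N)) c

section SemilatticeSup

variable {β : Type*} [SemilatticeSup β] {N : ℕ} {c : ℕ → β}

lemma le_windowMax {j k : ℕ} (hkj : k - N ≤ j) (hjk : j ≤ k) : c j ≤ windowMax N c k :=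
  Finset.le_sup' c (Finset.mem_Icc.mpr ⟨hkj, hjk⟩)

lemma windowMax_antitone (hc : ∀ k, c (k + 1) ≤ windowMax N c k) : Antitone (windowMax N c) := by
  refine antitone_nat_of_succ_le fun k => Finset.sup'_le _ _ fun j hj => ?_
  rw [Finset.mem_Icc] at hj
  rcases hj.2.eq_or_lt with rfl | hjk
  · exact hc k
  · exact le_windowMax (by lia) (by lia)

lemma le_apply_zero_of_succ_le_windowMax (hc : ∀ k, c (k + 1) ≤ windowMax N c k) (k : ℕ) :
    c k ≤ c 0 :=
  calc c k ≤ windowMax N c k := le_windowMax (Nat.sub_le k N) le_rfl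
    _ ≤ windowMax N c 0 := windowMax_antitone hc k.zero_le
    _ = c 0 := by simp [windowMax]

end SemilatticeSup

lemma exists_le_apply_add_eq_windowMax {β : Type*} [LinearOrder β] (N : ℕ) (c : ℕ → β) (k : ℕ) :
    ∃ j ≤ N, c (k + j) = windowMax N c (k + N) := by
  obtain ⟨i, hi, hmax⟩ :=
    Finset.exists_mem_eq_sup' (Finset.nonempty_Icc.mpr (Nat.sub_le (k + N) N)) c
  rw [Finset.mem_Icc] at hi
  exact ⟨i - k, by lia, by rw [windowMax, hmax, Nat.add_sub_cancel' (by lia)]⟩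

variable {c d : ℕ → ℝ} {N : ℕ} {m : ℝ} {ι : Type*} {l : Filter ι}

lemma tendsto_decrease_zero_of_tendsto_succ (hd : ∀ k, 0 ≤ d k)
    (hdec : ∀ k, c (k + 1) ≤ windowMax N c k - d k)
    (hm : Tendsto (windowMax N c) atTop (𝓝 m)) {v : ι → ℕ} (hv : Tendsto v l atTop)
    (hc : Tendsto (fun i => c (v i + 1)) l (𝓝 m)) :
    Tendsto (fun i => d (v i)) l (𝓝 0) := by
  have hgap : Tendsto (fun i => windowMax N c (v i) - c (v i + 1)) l (𝓝 0) := by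
    simpa only [sub_self, Function.comp_apply] using (hm.comp hv).sub hc
  exact squeeze_zero (fun i => hd _) (fun i => by linarith [hdec (v i)]) hgap

-- `hcd` says that `c (k + 1) - c k` is uniformly small over all `k` for which `d k` is small.
lemma tendsto_windowMax_limit_of_tendsto_add (hd : ∀ k, 0 ≤ d k)
    (hdec : ∀ k, c (k + 1) ≤ windowMax N c k - d k)
    (hcd : Tendsto (fun k => c (k + 1) - c k) (comap d (𝓝 0)) (𝓝 0))
    (hm : Tendsto (windowMax N c) atTop (𝓝 m)) {v : ι → ℕ} (hv : Tendsto v l atTop) (j : ℕ)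
    (hc : Tendsto (fun i => c (v i + j)) l (𝓝 m)) :
    Tendsto (fun i => c (v i)) l (𝓝 m) := by
  induction j with
  | zero => exact hc
  | succ j ih =>
    have hvj : Tendsto (fun i => v i + j) l atTop := (tendsto_add_atTop_nat j).comp hv
    have hdecrease : Tendsto (fun i => d (v i + j)) l (𝓝 0) :=
      tendsto_decrease_zero_of_tendsto_succ hd hdec hm hvj hc
    have hdiff : Tendsto (fun i => c (v i + j + 1) - c (v i + j)) l (𝓝 0) :=
      hcd.comp (tendsto_comap_iff.mpr hdecrease)
    refine ih ?_
    simpa only [sub_sub_cancel, sub_zero, ← add_assoc] using hc.sub hdiff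

-- With `m` the limit of the window maxima, the sets `{k | m ≤ c (k + 1 + j)}`, `j ≤ N`, cover `ℕ`,
-- so it suffices to work along each of them separately.
theorem tendsto_decrease_zero_of_succ_le_windowMax_sub (hbdd : BddBelow (Set.range c))
    (hd : ∀ k, 0 ≤ d k) (hdec : ∀ k, c (k + 1) ≤ windowMax N c k - d k)
    (hcd : Tendsto (fun k => c (k + 1) - c k) (comap d (𝓝 0)) (𝓝 0)) :
    Tendsto d atTop (𝓝 0) := by
  have hanti : Antitone (windowMax N c) :=
    windowMax_antitone fun k => (hdec k).trans (sub_le_self _ (hd k))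
  have hle (k : ℕ) : c k ≤ windowMax N c k := le_windowMax (Nat.sub_le k N) le_rfl
  have hbddMax : BddBelow (Set.range (windowMax N c)) := hbdd.range_mono _ hle
  set m := ⨅ k, windowMax N c k
  have hm : Tendsto (windowMax N c) atTop (𝓝 m) := tendsto_atTop_ciInf hanti hbddMax
  have hpiece (j : ℕ) : Tendsto d (atTop ⊓ 𝓟 {k | m ≤ c (k + 1 + j)}) (𝓝 0) := by
    have hshift (i : ℕ) : Tendsto (· + i) (atTop ⊓ 𝓟 {k | m ≤ c (k + 1 + j)}) atTop :=
      (tendsto_add_atTop_nat i).mono_left inf_le_left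
    refine tendsto_decrease_zero_of_tendsto_succ hd hdec hm (hshift 0)
      (tendsto_windowMax_limit_of_tendsto_add hd hdec hcd hm (hshift 1) j ?_)
    refine tendsto_of_tendsto_of_tendsto_of_le_of_le' tendsto_const_nhds
      (hm.comp ((hshift (1 + j)).congr fun k => (add_assoc k 1 j).symm))
      (mem_inf_of_right (mem_principal_self _)) (Eventually.of_forall fun k => hle _)
  refine tendsto_nhds.mpr fun s hs h0 => ?_
  have hall : ∀ᶠ k in atTop, ∀ j ∈ Finset.range (N + 1), m ≤ c (k + 1 + j) → k ∈ d ⁻¹' s :=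
    (eventually_all_finset _).mpr fun j _ =>
      eventually_inf_principal.mp ((hpiece j).eventually_mem (hs.mem_nhds h0))
  filter_upwards [hall] with k hk
  obtain ⟨j, hjN, hj⟩ := exists_le_apply_add_eq_windowMax N c (k + 1)
  exact hk j (Finset.mem_range_succ_iff.mpr hjN) (hj ▸ ciInf_le hbddMax _)

lemma tendsto_zero_of_tendsto_const_mul_sq {a : ℝ} (ha : a ≠ 0) {r : ι → ℝ}
    (hr : Tendsto (fun i => a * r i ^ 2) l (𝓝 0)) : Tendsto r l (𝓝 0) := by
  have hsq : Tendsto (fun i => r i ^ 2) l (𝓝 0) := by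
    simpa [ha] using hr.const_mul a⁻¹
  rw [tendsto_zero_iff_abs_tendsto_zero]
  simpa [Function.comp_def, Real.sqrt_sq_eq_abs] using hsq.sqrt

theorem tendsto_dist_succ_of_succ_le_windowMax_sub {X : Type*} [PseudoMetricSpace X] {G : X → ℝ}
    {S : Set X} (hG : UniformContinuousOn G S) {x : ℕ → X} (hxS : ∀ k, x k ∈ S)
    (hbdd : BddBelow (Set.range fun k => G (x k))) {a : ℝ} (ha : 0 < a)
    (hdec : ∀ k, G (x (k + 1)) ≤
      windowMax N (fun j => G (x j)) k - a * dist (x (k + 1)) (x k) ^ 2) :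
    Tendsto (fun k => dist (x (k + 1)) (x k)) atTop (𝓝 0) := by
  refine tendsto_zero_of_tendsto_const_mul_sq ha.ne'
    (tendsto_decrease_zero_of_succ_le_windowMax_sub hbdd (fun k => by positivity) hdec ?_)
  have hdist := tendsto_zero_of_tendsto_const_mul_sq ha.ne'
    (tendsto_comap (f := fun k => a * dist (x (k + 1)) (x k) ^ 2) (x := 𝓝 0))
  have hpairs := tendsto_inf.mpr ⟨tendsto_uniformity_iff_dist_tendsto_zero.mpr hdist,
    tendsto_principal.mpr (Eventually.of_forall fun k => Set.mk_mem_prod (hxS (k + 1)) (hxS k))⟩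
  have hdiff := tendsto_uniformity_iff_dist_tendsto_zero.mp (Tendsto.comp hG hpairs)
  exact (tendsto_zero_iff_abs_tendsto_zero _).mpr hdiff

/-- The sequence `x` starts in the domain of `F` and satisfies the nonmonotone line-search condition
`F (x (k + 1)) ≤ max {F (x j) | k - N ≤ j ≤ k} - a / 2 * dist (x (k + 1)) (x k) ^ 2`. The maximum is
taken over real parts: the condition forces `F (x k) ≠ ⊤`, so nothing is lost if `F` avoids `⊥`. -/
structure IsNonmonotoneDescent {X : Type*} [PseudoMetricSpace X] (F : X → EReal) (N : ℕ) (a : ℝ)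
    (x : ℕ → X) : Prop where
  apply_zero_ne_top : F (x 0) ≠ ⊤
  apply_succ_le (k : ℕ) : F (x (k + 1)) ≤
    ((windowMax N (fun j => (F (x j)).toReal) k - a / 2 * dist (x (k + 1)) (x k) ^ 2 : ℝ) : EReal)

namespace IsNonmonotoneDescent

variable {X : Type*} [PseudoMetricSpace X] {F : X → EReal} {a : ℝ} {x : ℕ → X}

lemma apply_ne_top (hx : IsNonmonotoneDescent F N a x) : ∀ k, F (x k) ≠ ⊤
  | 0 => hx.apply_zero_ne_top
  | k + 1 => ne_top_of_le_ne_top (EReal.coe_ne_top _) (hx.apply_succ_le k)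

lemma toReal_apply_succ_le (hF : ∀ z, F z ≠ ⊥) (hx : IsNonmonotoneDescent F N a x) (k : ℕ) :
    (F (x (k + 1))).toReal ≤
      windowMax N (fun j => (F (x j)).toReal) k - a / 2 * dist (x (k + 1)) (x k) ^ 2 := by
  rw [← EReal.coe_le_coe_iff, EReal.coe_toReal (hx.apply_ne_top _) (hF _)]
  exact hx.apply_succ_le k

lemma apply_le_apply_zero (hF : ∀ z, F z ≠ ⊥) (ha : 0 ≤ a) (hx : IsNonmonotoneDescent F N a x)
    (k : ℕ) : F (x k) ≤ F (x 0) := by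
  have hle : (F (x k)).toReal ≤ (F (x 0)).toReal :=
    le_apply_zero_of_succ_le_windowMax (N := N) (c := fun j => (F (x j)).toReal)
      (fun j => (hx.toReal_apply_succ_le hF j).trans (sub_le_self _ (by positivity))) k
  rwa [← EReal.coe_le_coe_iff, EReal.coe_toReal (hx.apply_ne_top k) (hF _),
    EReal.coe_toReal hx.apply_zero_ne_top (hF _)] at hle

theorem tendsto_dist_succ (hF : ∀ z, F z ≠ ⊥) (ha : 0 < a) (hx : IsNonmonotoneDescent F N a x)
    (hcompact : IsCompact {z | F z ≤ F (x 0)})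
    (hcont : ContinuousOn (fun z => (F z).toReal) {z | F z ≤ F (x 0)}) :
    Tendsto (fun k => dist (x (k + 1)) (x k)) atTop (𝓝 0) := by
  have hmem := hx.apply_le_apply_zero hF ha.le
  have hbdd : BddBelow (Set.range fun k => (F (x k)).toReal) :=
    (hcompact.bddBelow_image hcont).mono <|
      Set.range_subset_iff.mpr fun k => Set.mem_image_of_mem (fun z => (F z).toReal) (hmem k)
  exact tendsto_dist_succ_of_succ_le_windowMax_sub
    (hcompact.uniformContinuousOn_of_continuous hcont) hmem hbdd (half_pos ha)
    (hx.toReal_apply_succ_le hF)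

end IsNonmonotoneDescent

end NonmonotoneDescent

section ConvexSubgradient

variable {n : ℕ} {g : EuclideanSpace ℝ (Fin n) → ℝ}

lemma norm_le_of_mem_csub {x y : EuclideanSpace ℝ (Fin n)} (hy : y ∈ csub g x) {B : ℝ}
    (hB : ∀ z ∈ Metric.closedBall x 1, g z - g x ≤ B) : ‖y‖ ≤ B := by
  set e := ‖y‖⁻¹ • y
  have he : ‖e‖ ≤ 1 := by
    rw [norm_smul, norm_inv, norm_norm]
    exact inv_mul_le_one
  have hinner : ⟪y, e⟫ = ‖y‖ := by
    rw [real_inner_smul_right, real_inner_self_eq_norm_mul_norm, ← mul_assoc, inv_mul_mul_self]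
  have hsupport := hy (x + e)
  rw [add_sub_cancel_left, hinner] at hsupport
  linarith [hB (x + e) (by simpa using he)]

lemma isBounded_biUnion_csub (hg : Continuous g) {S : Set (EuclideanSpace ℝ (Fin n))}
    (hS : Bornology.IsBounded S) : Bornology.IsBounded (⋃ x ∈ S, csub g x) := by
  obtain ⟨C, hC⟩ := (hS.cthickening (δ := 1)).isCompact_closure.exists_bound_of_continuousOn
    hg.continuousOn
  have hCx {x z} (hx : x ∈ S) (hz : z ∈ Metric.closedBall x 1) : |g z| ≤ C :=
    hC z (subset_closure (Metric.closedBall_subset_cthickening hx 1 hz))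
  refine isBounded_iff_forall_norm_le.mpr ⟨2 * C, fun y hy => ?_⟩
  obtain ⟨x, hx, hyx⟩ := Set.mem_iUnion₂.mp hy
  refine norm_le_of_mem_csub hyx fun z hz => ?_
  linarith [(abs_le.mp (hCx hx hz)).2,
    (abs_le.mp (hCx hx (Metric.mem_closedBall_self zero_le_one))).1]

lemma mem_csub_of_tendsto {ι : Type*} {l : Filter ι} [l.NeBot] {x y : ι → EuclideanSpace ℝ (Fin n)}
    {x₀ y₀ : EuclideanSpace ℝ (Fin n)} (hg : ContinuousAt g x₀) (hx : Tendsto x l (𝓝 x₀))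
    (hy : Tendsto y l (𝓝 y₀)) (hyx : ∀ i, y i ∈ csub g (x i)) : y₀ ∈ csub g x₀ := fun z =>
  le_of_tendsto' ((hg.tendsto.comp hx).add (hy.inner (hx.const_sub z))) fun i => hyx i z

end ConvexSubgradient

section ProximalStep

variable {n : ℕ} {f : EuclideanSpace ℝ (Fin n) → EReal}

lemma mem_fsub_of_eventually_quadratic_le {x v : EuclideanSpace ℝ (Fin n)} (hx_top : f x ≠ ⊤)
    (hx_bot : f x ≠ ⊥) {C : ℝ}
    (hquad : ∀ᶠ z in 𝓝[≠] x, f x + ((⟪v, z - x⟫ - C * ‖z - x‖ ^ 2 : ℝ) : EReal) ≤ f z) :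
    v ∈ fsub f x := by
  refine ⟨hx_top, ?_⟩
  rcases eq_or_neBot (𝓝[≠] x) with hbot | _
  · simp [hbot]
  have hlim : Tendsto (fun z => ((-(C * ‖z - x‖) : ℝ) : EReal)) (𝓝[≠] x) (𝓝 0) := by
    rw [← EReal.coe_zero, EReal.tendsto_coe]
    have hcont : Continuous fun z => -(C * ‖z - x‖) := by fun_prop
    simpa using (hcont.tendsto x).mono_left nhdsWithin_le_nhds
  rw [← hlim.liminf_eq]
  refine liminf_le_liminf ?_
  filter_upwards [hquad, self_mem_nhdsWithin] with z hz hzx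
  have hpos : 0 < ‖z - x‖ := norm_pos_iff.mpr (sub_ne_zero.mpr hzx)
  lift f x to ℝ using ⟨hx_top, hx_bot⟩ with fx
  rw [EReal.le_div_iff_mul_le (EReal.coe_pos.mpr hpos) (EReal.coe_ne_top _),
    EReal.le_sub_iff_add_le (by simp) (by simp), EReal.le_sub_iff_add_le (by simp) (by simp)]
  convert hz using 1
  norm_cast
  ring

lemma quadratic_le_of_mem_proxSet {α : ℝ} (hα : 0 < α) {p u : EuclideanSpace ℝ (Fin n)}
    (hp_top : f p ≠ ⊤) (hp_bot : f p ≠ ⊥) (hp : p ∈ proxSet (fun z => (α : EReal) * f z) u)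
    (z : EuclideanSpace ℝ (Fin n)) :
    f p + ((⟪α⁻¹ • (u - p), z - p⟫ - α⁻¹ / 2 * ‖z - p‖ ^ 2 : ℝ) : EReal) ≤ f z := by
  have hmin := hp z
  have hsq : ‖z - u‖ ^ 2 = ‖z - p‖ ^ 2 - 2 * ⟪u - p, z - p⟫ + ‖p - u‖ ^ 2 := by
    rw [← sub_sub_sub_cancel_right z u p, norm_sub_sq_real, norm_sub_rev p u, real_inner_comm]
  lift f p to ℝ using ⟨hp_top, hp_bot⟩ with fp
  induction hfz : f z with
  | top => exact le_top
  | bot =>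
    simp only [hfz, EReal.coe_mul_bot_of_pos hα, EReal.bot_add, le_bot_iff] at hmin
    exact absurd hmin (by norm_cast)
  | coe fz =>
    rw [hfz] at hmin
    norm_cast at hmin ⊢
    rw [hsq] at hmin
    refine le_of_mul_le_mul_left ?_ hα
    calc α * (fp + (⟪α⁻¹ • (u - p), z - p⟫ - α⁻¹ / 2 * ‖z - p‖ ^ 2))
        = α * fp + ⟪u - p, z - p⟫ - ‖z - p‖ ^ 2 / 2 := by
          rw [real_inner_smul_left]
          field_simp
          ring
      _ ≤ α * fz := by linarith

lemma smul_sub_mem_fsub_of_mem_proxSet {α : ℝ} (hα : 0 < α) {p u : EuclideanSpace ℝ (Fin n)}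
    (hp_top : f p ≠ ⊤) (hp_bot : f p ≠ ⊥) (hp : p ∈ proxSet (fun z => (α : EReal) * f z) u) :
    α⁻¹ • (u - p) ∈ fsub f p :=
  mem_fsub_of_eventually_quadratic_le hp_top hp_bot
    (Eventually.of_forall (quadratic_le_of_mem_proxSet hα hp_top hp_bot hp))

lemma mem_proxSet_of_tendsto {ι : Type*} {l : Filter ι} [l.NeBot] {α : ι → ℝ} {α₀ : ℝ}
    {p u : ι → EuclideanSpace ℝ (Fin n)} {p₀ u₀ : EuclideanSpace ℝ (Fin n)} (hα₀ : α₀ ≠ 0)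
    (hα : Tendsto α l (𝓝 α₀)) (hp : Tendsto p l (𝓝 p₀)) (hu : Tendsto u l (𝓝 u₀))
    (hfp : Tendsto (fun i => f (p i)) l (𝓝 (f p₀)))
    (hprox : ∀ i, p i ∈ proxSet (fun z => (α i : EReal) * f z) (u i)) :
    p₀ ∈ proxSet (fun z => (α₀ : EReal) * f z) u₀ := by
  have hlim {q : ι → EuclideanSpace ℝ (Fin n)} {q₀} (hq : Tendsto q l (𝓝 q₀))
      (hfq : Tendsto (fun i => f (q i)) l (𝓝 (f q₀))) :
      Tendsto (fun i => (α i : EReal) * f (q i) + ((‖q i - u i‖ ^ 2 / 2 : ℝ) : EReal)) l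
        (𝓝 ((α₀ : EReal) * f q₀ + ((‖q₀ - u₀‖ ^ 2 / 2 : ℝ) : EReal))) := by
    have hmul : Tendsto (fun i => (α i : EReal) * f (q i)) l (𝓝 ((α₀ : EReal) * f q₀)) :=
      EReal.Tendsto.mul (EReal.tendsto_coe.mpr hα) hfq (by simp [hα₀]) (by simp [hα₀])
        (by simp) (by simp)
    have hnorm : Tendsto (fun i => ((‖q i - u i‖ ^ 2 / 2 : ℝ) : EReal)) l
        (𝓝 ((‖q₀ - u₀‖ ^ 2 / 2 : ℝ) : EReal)) :=
      EReal.tendsto_coe.mpr (((hq.sub hu).norm.pow 2).div_const 2)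
    exact (EReal.continuousAt_add (p := (_, _)) (by simp) (by simp)).tendsto.comp
      (hmul.prodMk_nhds hnorm)
  exact fun z => le_of_tendsto_of_tendsto' (hlim hp hfp)
    (hlim tendsto_const_nhds tendsto_const_nhds) fun i => hprox i z

theorem exists_mem_csub_smul_sub_mem_fsub_of_tendsto {ι : Type*} {U : Ultrafilter ι}
    {g : EuclideanSpace ℝ (Fin n) → ℝ} {h' : EuclideanSpace ℝ (Fin n) → EuclideanSpace ℝ (Fin n)}
    {p x : ι → EuclideanSpace ℝ (Fin n)} {xs : EuclideanSpace ℝ (Fin n)} {c : ι → ℝ}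
    {αlo αhi cs : ℝ} (hg : Continuous g) (hh' : ContinuousAt h' xs) (hfxs_top : f xs ≠ ⊤)
    (hfxs_bot : f xs ≠ ⊥) (hαlo : 0 < αlo) (hx : Tendsto x U (𝓝 xs)) (hp : Tendsto p U (𝓝 xs))
    (hfp : Tendsto (fun i => f (p i)) U (𝓝 (f xs))) (hc : Tendsto c U (𝓝 cs))
    (hstep : ∀ i, ∃ α ∈ Set.Icc αlo αhi, ∃ y ∈ csub g (x i),
      p i ∈ proxSet (fun z => (α : EReal) * f z) (x i - α • h' (x i) + (α * c i) • y)) :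
    ∃ ys ∈ csub g xs, cs • ys - h' xs ∈ fsub f xs := by
  choose α hα y hy hprox using hstep
  have hα_mem : ∀ᶠ i in U, α i ∈ Set.Icc αlo αhi := Eventually.of_forall hα
  obtain ⟨αs, hαs_mem, hαs⟩ := isCompact_Icc.ultrafilter_le_nhds' (U.map α) hα_mem
  have hαs_pos : 0 < αs := hαlo.trans_le hαs_mem.1
  have hy_mem : ∀ᶠ i in U, y i ∈ closure (⋃ z ∈ Metric.closedBall xs 1, csub g z) := by
    filter_upwards [hx.eventually_mem (Metric.closedBall_mem_nhds xs one_pos)] with i hi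
    exact subset_closure (Set.mem_biUnion hi (hy i))
  obtain ⟨ys, -, hys⟩ := (isBounded_biUnion_csub hg
    Metric.isBounded_closedBall).isCompact_closure.ultrafilter_le_nhds' (U.map y) hy_mem
  refine ⟨ys, mem_csub_of_tendsto hg.continuousAt hx hys hy, ?_⟩
  have hcenter : Tendsto (fun i => x i - α i • h' (x i) + (α i * c i) • y i) U
      (𝓝 (xs - αs • h' xs + (αs * cs) • ys)) :=
    (hx.sub (Tendsto.smul hαs (hh'.tendsto.comp hx))).add ((Tendsto.mul hαs hc).smul hys)
  have hsub := smul_sub_mem_fsub_of_mem_proxSet hαs_pos hfxs_top hfxs_bot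
    (mem_proxSet_of_tendsto hαs_pos.ne' hαs hp hcenter hfp hprox)
  have hstationary : αs⁻¹ • (xs - αs • h' xs + (αs * cs) • ys - xs) = cs • ys - h' xs := by
    rw [inv_smul_eq_iff₀ hαs_pos.ne', smul_sub, smul_smul]
    abel
  rwa [hstationary] at hsub

end ProximalStep

section FractionalObjective

variable {n : ℕ} {f : EuclideanSpace ℝ (Fin n) → EReal} {g h : EuclideanSpace ℝ (Fin n) → ℝ}
  {x : EuclideanSpace ℝ (Fin n)}

lemma Ffrac_ne_top_iff : Ffrac f g h x ≠ ⊤ ↔ g x ≠ 0 ∧ f x ≠ ⊤ := by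
  unfold Ffrac
  split_ifs with hx <;> simp [hx]

lemma Ffrac_ne_bot : Ffrac f g h x ≠ ⊥ := by
  unfold Ffrac
  split_ifs <;> simp

lemma Ffrac_eq_coe_div (hx : Ffrac f g h x ≠ ⊤) :
    Ffrac f g h x = (((f x).toReal + h x) / g x : ℝ) :=
  if_pos (Ffrac_ne_top_iff.mp hx)

-- The right-hand side is free of division, which makes sublevel sets visibly closed.
lemma Ffrac_le_coe_iff (hf_bot : f x ≠ ⊥) (hg_pos : f x ≠ ⊤ → g x ≠ 0 → 0 < g x)
    (hfh_pos : g x = 0 → 0 < f x + (h x : EReal)) (t : ℝ) :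
    Ffrac f g h x ≤ t ↔ f x ≤ ((t * g x - h x : ℝ) : EReal) := by
  by_cases hf_top : f x = ⊤
  · simp only [Ffrac, hf_top, ne_eq, not_true_eq_false, and_false, if_false, top_le_iff,
      EReal.coe_ne_top]
  lift f x to ℝ using ⟨hf_top, hf_bot⟩ with fx hfx
  by_cases hg : g x = 0
  · have hpos : 0 < fx + h x := by exact_mod_cast hfh_pos hg
    simp only [Ffrac, hg, ne_eq, not_true_eq_false, false_and, if_false, top_le_iff,
      EReal.coe_ne_top, mul_zero, zero_sub, EReal.coe_le_coe_iff, false_iff, not_le]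
    linarith
  · rw [Ffrac_eq_coe_div (Ffrac_ne_top_iff.mpr ⟨hg, hfx ▸ hf_top⟩), ← hfx, EReal.toReal_coe,
      EReal.coe_le_coe_iff, EReal.coe_le_coe_iff, div_le_iff₀ (hg_pos hf_top hg), le_sub_iff_add_le]

lemma isClosed_setOf_Ffrac_le (hf_bot : ∀ z, f z ≠ ⊥) (hf_lsc : LowerSemicontinuous f)
    (hg : Continuous g) (hh : Continuous h) (hg_pos : ∀ z, f z ≠ ⊤ → g z ≠ 0 → 0 < g z)
    (hfh_pos : ∀ z, g z = 0 → 0 < f z + (h z : EReal)) (hx : Ffrac f g h x ≠ ⊤) :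
    IsClosed {z | Ffrac f g h z ≤ Ffrac f g h x} := by
  lift Ffrac f g h x to ℝ using ⟨hx, Ffrac_ne_bot⟩ with t
  simp only [fun z => Ffrac_le_coe_iff (hf_bot z) (hg_pos z) (hfh_pos z) t]
  have hgraph : Continuous fun z => (z, ((t * g z - h z : ℝ) : EReal)) :=
    continuous_id.prodMk (continuous_coe_real_ereal.comp (by fun_prop))
  exact hf_lsc.isClosed_epigraph.preimage hgraph

lemma continuousOn_toReal_Ffrac (hf_bot : ∀ z, f z ≠ ⊥) (hf : ContinuousOn f {z | f z ≠ ⊤})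
    (hg : Continuous g) (hh : Continuous h) :
    ContinuousOn (fun z => (Ffrac f g h z).toReal) {z | Ffrac f g h z ≠ ⊤} := by
  have hf_toReal : ContinuousOn (fun z => (f z).toReal) {z | f z ≠ ⊤} :=
    EReal.continuousOn_toReal.comp hf fun z hz => by simpa using ⟨hf_bot z, hz⟩
  have hdiv : ContinuousOn (fun z => ((f z).toReal + h z) / g z) {z | Ffrac f g h z ≠ ⊤} :=
    ((hf_toReal.mono fun z hz => (Ffrac_ne_top_iff.mp hz).2).add hh.continuousOn).div
      hg.continuousOn fun z hz => (Ffrac_ne_top_iff.mp hz).1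
  exact hdiv.congr fun z hz => by rw [Ffrac_eq_coe_div hz, EReal.toReal_coe]

end FractionalObjective

theorem pgsa_line_search_accumulation_point_is_critical_general {n : ℕ}
    {f : EuclideanSpace ℝ (Fin n) → EReal} {g h : EuclideanSpace ℝ (Fin n) → ℝ}
    {h' : EuclideanSpace ℝ (Fin n) → EuclideanSpace ℝ (Fin n)}
    (hf_ne_bot : ∀ z, f z ≠ ⊥) (hf_lsc : LowerSemicontinuous f)
    (hf_cont : ContinuousOn f {z | f z ≠ ⊤}) (hg_cont : Continuous g)
    (hh_grad : ∀ z, HasGradientAt h (h' z) z) (hh'_cont : Continuous h')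
    (hg_pos : ∀ z, f z ≠ ⊤ → g z ≠ 0 → 0 < g z)
    (hfh_pos : ∀ z, g z = 0 → 0 < f z + (h z : EReal))
    {a : ℝ} (ha : 0 < a) {N : ℕ} {αlo αhi : ℝ} (hαlo : 0 < αlo)
    {x : ℕ → EuclideanSpace ℝ (Fin n)} (hdescent : IsNonmonotoneDescent (Ffrac f g h) N a x)
    (hbdd : Bornology.IsBounded {z | Ffrac f g h z ≤ Ffrac f g h (x 0)})
    (hiter : ∀ k, ∃ α ∈ Set.Icc αlo αhi, ∃ y ∈ csub g (x k),
      x (k + 1) ∈ proxSet (fun z => (α : EReal) * f z)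
        (x k - α • h' (x k) + (α * (Ffrac f g h (x k)).toReal) • y))
    {xs : EuclideanSpace ℝ (Fin n)} (hxs : MapClusterPt xs atTop x) :
    (g xs ≠ 0 ∧ f xs ≠ ⊤) ∧
      ∃ ys ∈ csub g xs, (Ffrac f g h xs).toReal • ys - h' xs ∈ fsub f xs := by
  have hh_cont : Continuous h := continuous_iff_continuousAt.mpr fun z =>
    (hh_grad z).hasFDerivAt.continuousAt
  have hx0 := hdescent.apply_zero_ne_top
  have hclosed := isClosed_setOf_Ffrac_le hf_ne_bot hf_lsc hg_cont hh_cont hg_pos hfh_pos hx0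
  have hF_cont := continuousOn_toReal_Ffrac hf_ne_bot hf_cont hg_cont hh_cont
  have hdist : Tendsto (fun k => dist (x (k + 1)) (x k)) atTop (𝓝 0) :=
    hdescent.tendsto_dist_succ (fun _ => Ffrac_ne_bot) ha
      (Metric.isCompact_of_isClosed_isBounded hclosed hbdd)
      (hF_cont.mono fun z hz => ne_top_of_le_ne_top hx0 hz)
  obtain ⟨U, hU, hx⟩ := mapClusterPt_iff_ultrafilter.mp hxs
  have hx_succ : Tendsto (fun k => x (k + 1)) U (𝓝 xs) :=
    hx.congr_dist (by simpa only [dist_comm] using hdist.mono_left hU)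
  have hFxs : Ffrac f g h xs ≠ ⊤ := ne_top_of_le_ne_top hx0 <| hclosed.mem_of_tendsto hx <|
    Eventually.of_forall <| hdescent.apply_le_apply_zero (fun _ => Ffrac_ne_bot) ha.le
  have hxs_dom := Ffrac_ne_top_iff.mp hFxs
  have hF_lim := (hF_cont xs hFxs).tendsto.comp <|
    tendsto_nhdsWithin_iff.mpr ⟨hx, Eventually.of_forall hdescent.apply_ne_top⟩
  have hf_lim := (hf_cont xs hxs_dom.2).tendsto.comp <| tendsto_nhdsWithin_iff.mpr
    ⟨hx_succ, Eventually.of_forall fun k => (Ffrac_ne_top_iff.mp (hdescent.apply_ne_top (k + 1))).2⟩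
  exact ⟨hxs_dom, exists_mem_csub_smul_sub_mem_fsub_of_tendsto hg_cont hh'_cont.continuousAt
    hxs_dom.2 (hf_ne_bot xs) hαlo hx hx_succ hf_lim hF_lim hiter⟩

/-- Theorem 5.2: any accumulation point of the sequence generated by PGSA with
(nonmonotone) line search is a critical point of F. -/
theorem pgsa_line_search_accumulation_point_is_critical
    {n : ℕ} (hn : 1 ≤ n)
    (f : EuclideanSpace ℝ (Fin n) → EReal) (g h : EuclideanSpace ℝ (Fin n) → ℝ)
    (h' : EuclideanSpace ℝ (Fin n) → EuclideanSpace ℝ (Fin n)) (L : ℝ)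
    (hf_ne_bot : ∀ z, f z ≠ ⊥) (hf_proper : ∃ z, f z ≠ ⊤)
    (hf_lsc : LowerSemicontinuous f)
    (hf_bdd : ∃ m : ℝ, ∀ z, (m : EReal) ≤ f z)
    (hf_cont : ContinuousOn f {z | f z ≠ ⊤})
    (hg_cvx : ConvexOn ℝ Set.univ g)
    (hL : 0 < L)
    (hh_grad : ∀ z, HasGradientAt h (h' z) z)
    (hh_lip : LipschitzWith (Real.toNNReal L) h')
    (hΩ : ∃ z, g z ≠ 0)
    (hfh : ∀ z, 0 ≤ f z + ((h z : ℝ) : EReal))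
    (hg_pos : ∀ z, f z ≠ ⊤ → g z ≠ 0 → 0 < g z)
    (hA1 : ∀ z, g z = 0 → f z + ((h z : ℝ) : EReal) ≠ 0)
    (hA2 : ∀ t : ℝ, Bornology.IsBounded {z | Ffrac f g h z ≤ (t : EReal)})
    (a : ℝ) (ha : 0 < a) (N : ℕ) (αlo αhi : ℝ) (hαlo : 0 < αlo) (hαhi : αlo ≤ αhi)
    (x : ℕ → EuclideanSpace ℝ (Fin n))
    (hx0 : g (x 0) ≠ 0 ∧ f (x 0) ≠ ⊤)
    (hiter : ∀ k, ∃ α : ℝ, α ∈ Set.Icc αlo αhi ∧ ∃ y ∈ csub g (x k),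
      x (k + 1) ∈ proxSet (fun z => ((α : ℝ) : EReal) * f z)
        (x k - α • h' (x k) + (α * (Ffrac f g h (x k)).toReal) • y))
    (hdom : ∀ k, g (x (k + 1)) ≠ 0 ∧ f (x (k + 1)) ≠ ⊤)
    (hdec : ∀ k, Ffrac f g h (x (k + 1)) ≤
      (((Finset.Icc (k - N) k).sup' (Finset.nonempty_Icc.mpr (Nat.sub_le k N))
          (fun j => (Ffrac f g h (x j)).toReal) -
        a / 2 * ‖x (k + 1) - x k‖ ^ 2 : ℝ) : EReal)) :
    ∀ xs : EuclideanSpace ℝ (Fin n),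
      (∃ φ : ℕ → ℕ, StrictMono φ ∧ Tendsto (fun j => x (φ j)) atTop (𝓝 xs)) →
      (g xs ≠ 0 ∧ f xs ≠ ⊤) ∧
        ∃ ys ∈ csub g xs, ((Ffrac f g h xs).toReal) • ys - h' xs ∈ fsub f xs := by
  rintro xs ⟨φ, hφ, hlim⟩
  have hFx0 : Ffrac f g h (x 0) ≠ ⊤ := Ffrac_ne_top_iff.mpr hx0
  exact pgsa_line_search_accumulation_point_is_critical_general hf_ne_bot hf_lsc hf_cont
    hg_cvx.locallyLipschitz.continuous hh_grad hh_lip.continuous hg_pos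
    (fun z hz => (hfh z).lt_of_ne' (hA1 z hz)) ha hαlo
    ⟨hFx0, fun k => by rw [dist_eq_norm]; exact hdec k⟩
    (EReal.coe_toReal hFx0 Ffrac_ne_bot ▸ hA2 _) hiter
    (.of_comp hφ.tendsto_atTop hlim.mapClusterPt)
end
end
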